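/- Let q ∈ ℂ with 0 < |q| < 1 and let x ∈ ℂ with x ≠ 0. Then Σ_{n ≥ 0} (x;q)_{n+1} (q/x;q)_n q^n = (1/(q;q)_∞) Σ_{r ≥ 0, n ≥ 0} (-1)^{n+r} x^{-r} q^{n(3n+5)/2 + 2nr + r(r+3)/2} (1 - x^{2r+1}), where all series converge absolutely. -/

import Mathlib

open Finset

/-- The finite q-Pochhammer symbol `(a;q)_n`. -/
noncomputable def qPoch (q a : ℂ) (n : ℕ) : ℂ := ∏ j ∈ Finset.range n, (1 - a * q ^ j)

/-- The infinite q-Pochhammer symbol `(a;q)_∞`. -/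
noncomputable def qPochInf (q a : ℂ) : ℂ := ∏' j : ℕ, (1 - a * q ^ j)

/-!
Induction on `n` gives a finite form of the Jacobi triple product: the coefficient of
`x⁻ʳ - xʳ⁺¹` in `(x;q)_{n+1} (q/x;q)_n` is `(-1)ʳ q^(r(r+1)/2) [2n + 1, n + r + 1]_q`. Multiplying
by `qⁿ`, summing over `n` and writing `n = m + r` turns this coefficient into
`(-1)ʳ q^(r(r+1)/2 + r) S(2r + 1)`, where `S(a) = ∑ₘ qᵐ [2m + a, m + a]_q`.

The two `q`-Pascal rules, applied to the larger family `S(z, a) = ∑ₘ zᵐ [2m + a, m + a]_q` at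
`z = q` and `z = q²`, show that `S(a) + q^(a+3) S(a + 3)` does not depend on `a`. Letting `a → ∞`,
it equals `lim S(a) = ∑ₘ qᵐ / (q;q)ₘ = 1 / (q;q)_∞`. Iterating
`S(a) = 1 / (q;q)_∞ - q^(a+3) S(a + 3)` yields
`S(a) = (q;q)_∞⁻¹ ∑ₙ (-1)ⁿ q^(3n(n+1)/2 + na)`.
-/

open Filter Topology

lemma succ_choose_two (n : ℕ) : (n + 1).choose 2 = n.choose 2 + n := by
  rw [Nat.choose_succ_succ' n 1, Nat.choose_one_right, add_comm]

lemma two_mul_succ_choose_two (n : ℕ) : 2 * (n + 1).choose 2 = n * (n + 1) := by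
  induction n with
  | zero => rfl
  | succ n ih =>
    rw [succ_choose_two, mul_add, ih]
    ring

section GaussianBinomial

variable {R : Type*}

/-- The Gaussian binomial coefficient `[n, k]_q`, defined by the `q`-Pascal rule so that it makes
sense for every `q` in a commutative semiring, roots of unity included. -/
def qChoose [CommSemiring R] (q : R) : ℕ → ℕ → R
  | _, 0 => 1
  | 0, _ + 1 => 0
  | n + 1, k + 1 => qChoose q n k + q ^ (k + 1) * qChoose q n (k + 1)

section CommSemiring

variable [CommSemiring R] (q : R)

lemma qChoose_zero_right (n : ℕ) : qChoose q n 0 = 1 := by cases n <;> rfl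

lemma qChoose_succ_succ (n k : ℕ) :
    qChoose q (n + 1) (k + 1) = qChoose q n k + q ^ (k + 1) * qChoose q n (k + 1) := rfl

lemma qChoose_eq_zero_of_lt : ∀ {n k : ℕ}, n < k → qChoose q n k = 0
  | _, 0, h => absurd h (Nat.not_lt_zero _)
  | 0, _ + 1, _ => rfl
  | n + 1, k + 1, h => by
    rw [qChoose_succ_succ, qChoose_eq_zero_of_lt (Nat.lt_of_succ_lt_succ h),
      qChoose_eq_zero_of_lt (Nat.lt_of_succ_lt h), mul_zero, add_zero]

lemma qChoose_self (n : ℕ) : qChoose q n n = 1 := by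
  induction n with
  | zero => rfl
  | succ n ih =>
    rw [qChoose_succ_succ, ih, qChoose_eq_zero_of_lt q n.lt_succ_self, mul_zero, add_zero]

/-- `q`-Pascal from the other side: it is subtraction-free because `i` stands for `n - k`. -/
lemma qChoose_add_succ_succ (i k : ℕ) :
    qChoose q (i + k + 1) (k + 1) = q ^ i * qChoose q (i + k) k + qChoose q (i + k) (k + 1) := by
  induction i generalizing k with
  | zero => simp [qChoose_self, qChoose_eq_zero_of_lt]
  | succ i ih =>
    rw [qChoose_succ_succ]
    induction k with
    | zero =>
      have hpascal : qChoose q (i + 1) 1 = q ^ i + qChoose q i 1 := by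
        simpa [qChoose_zero_right] using ih 0
      have hdef : qChoose q (i + 1) 1 = 1 + q * qChoose q i 1 := by
        simp [qChoose_succ_succ, qChoose_zero_right]
      simp only [add_zero, zero_add, qChoose_zero_right, mul_one, pow_one]
      nth_rewrite 1 [hpascal]
      rw [hdef]
      ring
    | succ k ihk =>
      rw [← qChoose_succ_succ, show i + 1 + k = i + (k + 1) by ring] at ihk
      rw [show i + 1 + (k + 1) = i + (k + 1) + 1 by ring]
      nth_rewrite 1 [ihk]
      nth_rewrite 1 [ih (k + 1)]
      rw [qChoose_succ_succ q _ k, qChoose_succ_succ q _ (k + 1)]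
      ring

lemma qChoose_add_right_eq_left (i k : ℕ) : qChoose q (i + k) k = qChoose q (i + k) i := by
  induction i generalizing k with
  | zero => rw [zero_add, qChoose_self, qChoose_zero_right]
  | succ i ihi =>
    induction k with
    | zero => rw [add_zero, qChoose_self, qChoose_zero_right]
    | succ k ihk =>
      have hi : qChoose q (i + 1 + k) (k + 1) = qChoose q (k + 1 + i) i := by
        rw [show i + 1 + k = i + (k + 1) by ring, ihi, add_comm i]
      have hk : qChoose q (i + 1 + k) k = qChoose q (k + 1 + i) (i + 1) := by
        rw [ihk, show k + 1 + i = i + 1 + k by ring]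
      rw [← add_assoc, qChoose_succ_succ, hi, hk, show i + 1 + k + 1 = k + 1 + i + 1 by ring,
        qChoose_add_succ_succ]
      ring

lemma qChoose_add_two_add_two (i k : ℕ) :
    qChoose q (i + k + 2) (k + 2) = q ^ i * qChoose q (i + k) k
      + (1 + q ^ (i + k + 1)) * qChoose q (i + k) (k + 1)
      + q ^ (k + 2) * qChoose q (i + k) (k + 2) := by
  have hupper : q ^ (k + 2) * qChoose q (i + k + 1) (k + 2) =
      q ^ (i + k + 1) * qChoose q (i + k) (k + 1)
        + q ^ (k + 2) * qChoose q (i + k) (k + 2) := by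
    rcases i with _ | i
    · simp [qChoose_eq_zero_of_lt]
    · rw [show i + 1 + k = i + (k + 1) by ring, qChoose_add_succ_succ]
      ring
  rw [qChoose_succ_succ, hupper, qChoose_add_succ_succ]
  ring

end CommSemiring

section CommRing

variable [CommRing R] (q : R)

/-- The coefficient of `x⁻ʳ - xʳ⁺¹` in `(x;q)_{n+1} (q/x;q)_n`. -/
def finiteThetaCoeff (n r : ℕ) : R :=
  (-1) ^ r * q ^ (r + 1).choose 2 * qChoose q (2 * n + 1) (n + r + 1)

lemma finiteThetaCoeff_eq_zero_of_lt {n r : ℕ} (h : n < r) : finiteThetaCoeff q n r = 0 := by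
  rw [finiteThetaCoeff, qChoose_eq_zero_of_lt q (by omega), mul_zero]

lemma finiteThetaCoeff_succ_zero (n : ℕ) :
    finiteThetaCoeff q (n + 1) 0 = (1 + q ^ (n + 1) + q ^ (2 * n + 2)) * finiteThetaCoeff q n 0
      - q ^ (n + 1) * finiteThetaCoeff q n 1 := by
  have hcentral : qChoose q (2 * n + 1) n = qChoose q (2 * n + 1) (n + 1) := by
    simpa [show n + 1 + n = 2 * n + 1 by ring] using qChoose_add_right_eq_left q (n + 1) n
  have hstep := qChoose_add_two_add_two q (n + 1) n
  rw [show n + 1 + n = 2 * n + 1 by ring, hcentral] at hstep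
  simp only [finiteThetaCoeff, show 2 * (n + 1) + 1 = 2 * n + 1 + 2 by ring,
    show n + 1 + 0 + 1 = n + 2 by ring, hstep, Nat.reduceAdd, Nat.choose_self,
    show Nat.choose 1 2 = 0 from rfl]
  ring

lemma finiteThetaCoeff_succ_succ {n s : ℕ} (hs : s ≤ n) :
    finiteThetaCoeff q (n + 1) (s + 1) = (1 + q ^ (2 * n + 2)) * finiteThetaCoeff q n (s + 1)
      - q ^ (n + 1) * (finiteThetaCoeff q n s + finiteThetaCoeff q n (s + 2)) := by
  obtain ⟨i, rfl⟩ := Nat.exists_eq_add_of_le hs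
  have hstep := qChoose_add_two_add_two q i (2 * s + i + 1)
  rw [show i + (2 * s + i + 1) = 2 * (s + i) + 1 by ring] at hstep
  simp only [finiteThetaCoeff, show 2 * (s + i + 1) + 1 = 2 * (s + i) + 1 + 2 by ring,
    show s + i + 1 + (s + 1) + 1 = 2 * s + i + 1 + 2 by ring,
    show s + i + (s + 1) + 1 = 2 * s + i + 1 + 1 by ring,
    show s + i + (s + 2) + 1 = 2 * s + i + 1 + 2 by ring,
    show s + i + s + 1 = 2 * s + i + 1 by ring, hstep, succ_choose_two (s + 2),
    succ_choose_two (s + 1), succ_choose_two s]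
  ring

lemma mul_sum_range_succ_of_three_term {z : R} {w : ℕ → R} (h0 : z * w 0 = w 1 - w 0)
    (hw : ∀ r, z * w (r + 1) = w (r + 2) + w r) (a : ℕ → R) (N : ℕ) :
    z * ∑ r ∈ range (N + 1), a r * w r =
      ∑ r ∈ range (N + 1), a r * w (r + 1) + ∑ r ∈ range N, a (r + 1) * w r - a 0 * w 0 := by
  induction N with
  | zero =>
    simp only [zero_add, sum_range_one, sum_range_zero, add_zero]
    linear_combination a 0 * h0
  | succ N ih =>
    rw [sum_range_succ, mul_add, ih, sum_range_succ (fun r => a r * w (r + 1)) (N + 1),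
      sum_range_succ (fun r => a (r + 1) * w r) N]
    linear_combination a (N + 1) * hw N

lemma sum_finiteThetaCoeff_succ {z : R} {w : ℕ → R} (h0 : z * w 0 = w 1 - w 0)
    (hw : ∀ r, z * w (r + 1) = w (r + 2) + w r) (n : ℕ) :
    ∑ r ∈ range (n + 2), finiteThetaCoeff q (n + 1) r * w r =
      (1 + q ^ (2 * n + 2) - q ^ (n + 1) * z) *
        ∑ r ∈ range (n + 1), finiteThetaCoeff q n r * w r := by
  have hzero := fun r (hr : n < r) => finiteThetaCoeff_eq_zero_of_lt q hr
  have hparts := mul_sum_range_succ_of_three_term h0 hw (finiteThetaCoeff q n) n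
  have hshift : ∑ r ∈ range (n + 1), finiteThetaCoeff q n (r + 1) * w (r + 1) =
      ∑ r ∈ range (n + 1), finiteThetaCoeff q n r * w r - finiteThetaCoeff q n 0 * w 0 := by
    rw [eq_sub_iff_add_eq, ← sum_range_succ' fun r => finiteThetaCoeff q n r * w r,
      sum_range_succ, hzero _ n.lt_succ_self, zero_mul, add_zero]
  have hshift_two : ∑ r ∈ range (n + 1), finiteThetaCoeff q n (r + 2) * w (r + 1) =
      ∑ r ∈ range n, finiteThetaCoeff q n (r + 1) * w r - finiteThetaCoeff q n 1 * w 0 := by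
    rw [eq_sub_iff_add_eq, ← sum_range_succ' fun r => finiteThetaCoeff q n (r + 1) * w r,
      sum_range_succ, sum_range_succ, hzero _ n.lt_succ_self, hzero _ (by omega), zero_mul,
      zero_mul, add_zero, add_zero]
  have hstep : ∀ r ∈ range (n + 1), finiteThetaCoeff q (n + 1) (r + 1) * w (r + 1) =
      (1 + q ^ (2 * n + 2)) * (finiteThetaCoeff q n (r + 1) * w (r + 1))
        - q ^ (n + 1) * (finiteThetaCoeff q n r * w (r + 1)
          + finiteThetaCoeff q n (r + 2) * w (r + 1)) := fun r hr => by
    rw [finiteThetaCoeff_succ_succ q (Nat.lt_succ_iff.mp (mem_range.mp hr))]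
    ring
  rw [sum_range_succ', sum_congr rfl hstep, sum_sub_distrib, ← mul_sum, ← mul_sum,
    sum_add_distrib, hshift, hshift_two, finiteThetaCoeff_succ_zero]
  linear_combination q ^ (n + 1) * hparts

end CommRing

end GaussianBinomial

section Pochhammer

lemma qPoch_succ (q a : ℂ) (n : ℕ) : qPoch q a (n + 1) = qPoch q a n * (1 - a * q ^ n) :=
  prod_range_succ _ _

theorem qPoch_mul_qPoch_eq_sum (q : ℂ) {x : ℂ} (hx : x ≠ 0) (n : ℕ) :
    qPoch q x (n + 1) * qPoch q (q / x) n =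
      ∑ r ∈ range (n + 1), finiteThetaCoeff q n r * (x⁻¹ ^ r - x ^ (r + 1)) := by
  induction n with
  | zero => simp [qPoch, finiteThetaCoeff, qChoose_self]
  | succ n ih =>
    have h0 : (x + x⁻¹) * (x⁻¹ ^ 0 - x ^ (0 + 1)) =
        (x⁻¹ ^ 1 - x ^ (1 + 1)) - (x⁻¹ ^ 0 - x ^ (0 + 1)) := by
      field_simp
      ring
    have hw : ∀ r, (x + x⁻¹) * (x⁻¹ ^ (r + 1) - x ^ (r + 1 + 1)) =
        (x⁻¹ ^ (r + 2) - x ^ (r + 2 + 1)) + (x⁻¹ ^ r - x ^ (r + 1)) := fun r => by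
      simp only [inv_pow]
      field_simp
      ring
    rw [sum_finiteThetaCoeff_succ q h0 hw, ← ih, qPoch_succ q x, qPoch_succ q (q / x)]
    field_simp
    ring

theorem qChoose_mul_qPoch_mul_qPoch (q : ℂ) (i k : ℕ) :
    qChoose q (i + k) k * (qPoch q q i * qPoch q q k) = qPoch q q (i + k) := by
  induction i generalizing k with
  | zero => simp [qChoose_self, qPoch]
  | succ i ihi =>
    induction k with
    | zero => simp [qChoose_zero_right, qPoch]
    | succ k ihk =>
      have hi := ihi (k + 1)
      rw [← add_assoc, qChoose_succ_succ, qPoch_succ q q (i + 1 + k), ← ihk]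
      rw [show i + (k + 1) = i + 1 + k by ring, ← ihk] at hi
      simp only [qPoch_succ q q k, qPoch_succ q q i] at hi ⊢
      linear_combination q ^ (k + 1) * (1 - q * q ^ i) * hi

lemma summable_pow_mul_of_bounded {𝕜 : Type*} [NormedField 𝕜] [CompleteSpace 𝕜] {z : 𝕜}
    (hz : ‖z‖ < 1) {f : ℕ → 𝕜} {C : ℝ} (hf : ∀ m, ‖f m‖ ≤ C) : Summable fun m => z ^ m * f m := by
  refine .of_norm_bounded ((summable_geometric_of_lt_one (norm_nonneg z) hz).mul_right C)
    fun m => ?_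
  rw [norm_mul, norm_pow]
  gcongr
  exact hf m

variable {q : ℂ} (hq : ‖q‖ < 1)
include hq

lemma one_sub_mul_pow_ne_zero (n : ℕ) : 1 - q * q ^ n ≠ 0 := fun h => by
  have hlt := pow_lt_one₀ (norm_nonneg q) hq n.succ_ne_zero
  rw [← norm_pow, pow_succ', ← sub_eq_zero.mp h, norm_one] at hlt
  exact lt_irrefl 1 hlt

lemma qPoch_self_ne_zero (n : ℕ) : qPoch q q n ≠ 0 :=
  prod_ne_zero_iff.mpr fun j _ => one_sub_mul_pow_ne_zero hq j

lemma summable_norm_neg_mul_pow (a : ℂ) : Summable fun j : ℕ => ‖-(a * q ^ j)‖ := by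
  simpa only [norm_neg, norm_mul, norm_pow] using
    (summable_geometric_of_lt_one (norm_nonneg q) hq).mul_left ‖a‖

lemma tendsto_qPoch (a : ℂ) : Tendsto (qPoch q a) atTop (𝓝 (qPochInf q a)) := by
  have hprod := multipliable_one_add_of_summable (summable_norm_neg_mul_pow hq a)
  simpa only [qPoch, qPochInf, sub_eq_add_neg] using! hprod.hasProd.tendsto_prod_nat

lemma qPochInf_self_ne_zero : qPochInf q q ≠ 0 := by
  have hne := tprod_one_add_ne_zero_of_summable (f := fun j : ℕ => -(q * q ^ j))
    (fun j => by simpa only [← sub_eq_add_neg] using one_sub_mul_pow_ne_zero hq j)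
    (summable_norm_neg_mul_pow hq q)
  simpa only [qPochInf, sub_eq_add_neg] using hne

lemma tendsto_inv_qPoch_self :
    Tendsto (fun n => (qPoch q q n)⁻¹) atTop (𝓝 (qPochInf q q)⁻¹) :=
  (tendsto_qPoch hq q).inv₀ (qPochInf_self_ne_zero hq)

lemma qChoose_eq_div (i k : ℕ) :
    qChoose q (i + k) k = qPoch q q (i + k) / (qPoch q q i * qPoch q q k) :=
  eq_div_of_mul_eq (mul_ne_zero (qPoch_self_ne_zero hq i) (qPoch_self_ne_zero hq k))
    (qChoose_mul_qPoch_mul_qPoch q i k)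

lemma exists_norm_qChoose_le : ∃ C, ∀ n k, ‖qChoose q n k‖ ≤ C := by
  obtain ⟨A, hA⟩ :=
    (Metric.isBounded_range_of_tendsto _ (tendsto_qPoch hq q)).exists_norm_le
  obtain ⟨B, hB⟩ :=
    (Metric.isBounded_range_of_tendsto _ (tendsto_inv_qPoch_self hq)).exists_norm_le
  rw [Set.forall_mem_range] at hA hB
  have hA0 : 0 ≤ A := (norm_nonneg _).trans (hA 0)
  have hB0 : 0 ≤ B := (norm_nonneg _).trans (hB 0)
  refine ⟨A * (B * B), fun n k => ?_⟩
  rcases lt_or_ge n k with hlt | hle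
  · rw [qChoose_eq_zero_of_lt q hlt, norm_zero]
    positivity
  · obtain ⟨i, rfl⟩ := Nat.exists_eq_add_of_le' hle
    rw [qChoose_eq_div hq, div_eq_mul_inv, mul_inv, norm_mul, norm_mul]
    gcongr
    exacts [hA _, hB _, hB _]

lemma tendsto_qChoose_add (i : ℕ) :
    Tendsto (fun k => qChoose q (i + k) k) atTop (𝓝 (qPoch q q i)⁻¹) := by
  have hratio := ((tendsto_qPoch hq q).comp (tendsto_add_atTop_nat i)).div
    ((tendsto_qPoch hq q).const_mul (qPoch q q i))
    (mul_ne_zero (qPoch_self_ne_zero hq i) (qPochInf_self_ne_zero hq))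
  rw [div_mul_cancel_right₀ (qPochInf_self_ne_zero hq)] at hratio
  refine hratio.congr fun k => ?_
  rw [qChoose_eq_div hq, add_comm i k, Pi.div_apply, Function.comp_apply]

theorem sum_range_pow_div_qPoch (n : ℕ) :
    ∑ m ∈ range (n + 1), q ^ m * (qPoch q q m)⁻¹ = (qPoch q q n)⁻¹ := by
  induction n with
  | zero => simp [qPoch]
  | succ n ih =>
    have hn := qPoch_self_ne_zero hq n
    have hfactor := one_sub_mul_pow_ne_zero hq n
    rw [sum_range_succ, ih, qPoch_succ]
    field_simp
    ring

theorem tsum_pow_div_qPoch : ∑' m, q ^ m * (qPoch q q m)⁻¹ = (qPochInf q q)⁻¹ := by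
  obtain ⟨B, hB⟩ :=
    (Metric.isBounded_range_of_tendsto _ (tendsto_inv_qPoch_self hq)).exists_norm_le
  have hsum := summable_pow_mul_of_bounded hq fun m => hB _ ⟨m, rfl⟩
  have hpartial := hsum.hasSum.tendsto_sum_nat.comp (tendsto_add_atTop_nat 1)
  refine tendsto_nhds_unique (hpartial.congr fun n => ?_) (tendsto_inv_qPoch_self hq)
  exact sum_range_pow_div_qPoch hq n

end Pochhammer

section CentralSum

lemma norm_mul_lt_one {R : Type*} [NonUnitalSeminormedRing R] {a b : R} (ha : ‖a‖ < 1)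
    (hb : ‖b‖ < 1) : ‖a * b‖ < 1 :=
  (norm_mul_le a b).trans_lt <| mul_lt_one_of_nonneg_of_lt_one_left (norm_nonneg a) ha hb.le

/-- The generating function `∑ₘ zᵐ [2m + a, m + a]_q` of the entries at distance `a` from the
centre of the `q`-Pascal triangle. Its value at `z = q`, `a = 2r + 1` is the one needed: times
`(-1)ʳ q^(r(r+1)/2 + r)`, it is the coefficient of `x⁻ʳ - xʳ⁺¹` in `∑ₙ (x;q)_{n+1} (q/x;q)_n qⁿ`. -/
noncomputable def centralSum (q z : ℂ) (a : ℕ) : ℂ :=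
  ∑' m : ℕ, z ^ m * qChoose q (2 * m + a) (m + a)

variable {q z : ℂ} (hq : ‖q‖ < 1)
include hq

lemma summable_pow_mul_qChoose (hz : ‖z‖ < 1) (a : ℕ) :
    Summable fun m => z ^ m * qChoose q (2 * m + a) (m + a) :=
  have ⟨_, hC⟩ := exists_norm_qChoose_le hq
  summable_pow_mul_of_bounded hz fun m => hC (2 * m + a) (m + a)

lemma tendsto_centralSum (hz : ‖z‖ < 1) :
    Tendsto (centralSum q z) atTop (𝓝 (∑' m, z ^ m * (qPoch q q m)⁻¹)) := by
  obtain ⟨C, hC⟩ := exists_norm_qChoose_le hq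
  refine tendsto_tsum_of_dominated_convergence
    ((summable_geometric_of_lt_one (norm_nonneg z) hz).mul_right C) (fun m => ?_)
    (.of_forall fun a m => ?_)
  · refine .const_mul _ (((tendsto_qChoose_add hq m).comp (tendsto_add_atTop_nat m)).congr
      fun a => ?_)
    rw [Function.comp_apply, add_comm a m, two_mul, add_assoc]
  · rw [norm_mul, norm_pow]
    gcongr
    exact hC _ _

lemma tendsto_centralSum_self : Tendsto (centralSum q q) atTop (𝓝 (qPochInf q q)⁻¹) :=
  tsum_pow_div_qPoch hq ▸ tendsto_centralSum hq hq

lemma centralSum_succ (hz : ‖z‖ < 1) (a : ℕ) :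
    centralSum q z (a + 1) =
      centralSum q z a + z * q ^ (a + 2) * centralSum q (z * q) (a + 2) := by
  have hs := summable_pow_mul_qChoose hq hz
  have hs' := summable_pow_mul_qChoose hq (norm_mul_lt_one hz hq) (a + 2)
  rw [centralSum, centralSum, centralSum, (hs (a + 1)).tsum_eq_zero_add, (hs a).tsum_eq_zero_add,
    ← tsum_mul_left, add_assoc,
    ← ((summable_nat_add_iff 1).mpr (hs a)).tsum_add (hs'.mul_left _)]
  congr 1
  · simp [qChoose_self]
  · refine tsum_congr fun m => ?_
    rw [← add_assoc (2 * (m + 1)), ← add_assoc (m + 1), qChoose_succ_succ,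
      show 2 * (m + 1) + a = 2 * m + (a + 2) by ring, show m + 1 + a + 1 = m + (a + 2) by ring]
    ring

lemma centralSum_add_three (hz : ‖z‖ < 1) (a : ℕ) :
    centralSum q z (a + 3) = centralSum q (z * q) (a + 2) + z * centralSum q z (a + 4) := by
  have hs := summable_pow_mul_qChoose hq hz
  have hs' := summable_pow_mul_qChoose hq (norm_mul_lt_one hz hq) (a + 2)
  rw [centralSum, centralSum, centralSum, (hs (a + 3)).tsum_eq_zero_add, hs'.tsum_eq_zero_add,
    ← tsum_mul_left, add_assoc,
    ← ((summable_nat_add_iff 1).mpr hs').tsum_add ((hs (a + 4)).mul_left _)]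
  congr 1
  · simp [qChoose_self]
  · refine tsum_congr fun m => ?_
    rw [show 2 * (m + 1) + (a + 3) = m + 1 + (m + a + 3) + 1 by ring,
      show m + 1 + (a + 3) = m + a + 3 + 1 by ring, qChoose_add_succ_succ,
      show m + 1 + (m + a + 3) = 2 * m + (a + 4) by ring,
      show 2 * (m + 1) + (a + 2) = 2 * m + (a + 4) by ring,
      show m + 1 + (a + 2) = m + a + 3 by ring, show m + a + 3 + 1 = m + (a + 4) by ring]
    ring

theorem centralSum_add_pow_mul_centralSum (a : ℕ) :
    centralSum q q a + q ^ (a + 3) * centralSum q q (a + 3) = (qPochInf q q)⁻¹ := by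
  have hstep : ∀ b, centralSum q q (b + 1) + q ^ (b + 4) * centralSum q q (b + 4) =
      centralSum q q b + q ^ (b + 3) * centralSum q q (b + 3) := fun b => by
    rw [centralSum_succ hq hq, centralSum_add_three hq hq b]
    ring
  have hconst : ∀ b, centralSum q q (b + a) + q ^ (b + a + 3) * centralSum q q (b + a + 3) =
      centralSum q q a + q ^ (a + 3) * centralSum q q (a + 3) := fun b => by
    induction b with
    | zero => rw [zero_add]
    | succ b ih => rw [← ih, ← hstep (b + a), add_right_comm b 1 a]
  have hlim := (tendsto_centralSum_self hq).add
    (((tendsto_pow_atTop_nhds_zero_of_norm_lt_one hq).mul (tendsto_centralSum_self hq)).comp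
      (tendsto_add_atTop_nat 3))
  rw [zero_mul, add_zero] at hlim
  exact tendsto_nhds_unique tendsto_const_nhds
    ((hlim.comp (tendsto_add_atTop_nat a)).congr hconst)

lemma norm_neg_one_pow_mul_pow_le (a n : ℕ) :
    ‖(-1) ^ n * q ^ (3 * (n + 1).choose 2 + n * a)‖ ≤ ‖q‖ ^ n := by
  rw [norm_mul, norm_pow, norm_pow, norm_neg, norm_one, one_pow, one_mul, succ_choose_two]
  exact pow_le_pow_of_le_one (norm_nonneg q) hq.le (by omega)

lemma centralSum_eq_sum_add (a N : ℕ) :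
    centralSum q q a =
      (qPochInf q q)⁻¹ * ∑ n ∈ range N, (-1) ^ n * q ^ (3 * (n + 1).choose 2 + n * a)
        + (-1) ^ N * q ^ (3 * (N + 1).choose 2 + N * a) * centralSum q q (3 * N + a) := by
  induction N with
  | zero => simp
  | succ N ih =>
    have hrec := centralSum_add_pow_mul_centralSum hq (3 * N + a)
    rw [ih, sum_range_succ, succ_choose_two (N + 1),
      show 3 * (N + 1) + a = 3 * N + a + 3 by ring]
    linear_combination (-1) ^ N * q ^ (3 * (N + 1).choose 2 + N * a) * hrec

theorem centralSum_eq_tsum (a : ℕ) :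
    centralSum q q a =
      (qPochInf q q)⁻¹ * ∑' n : ℕ, (-1) ^ n * q ^ (3 * (n + 1).choose 2 + n * a) := by
  have hsum : Summable fun n : ℕ => (-1) ^ n * q ^ (3 * (n + 1).choose 2 + n * a) :=
    .of_norm_bounded (summable_geometric_of_lt_one (norm_nonneg q) hq)
      (norm_neg_one_pow_mul_pow_le hq a)
  have htail : Tendsto (fun N => centralSum q q (3 * N + a)) atTop (𝓝 (qPochInf q q)⁻¹) :=
    (tendsto_centralSum_self hq).comp <|
      tendsto_atTop_mono (fun N => show N ≤ 3 * N + a by omega) tendsto_id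
  have hlim := (hsum.hasSum.tendsto_sum_nat.const_mul (qPochInf q q)⁻¹).add
    (hsum.tendsto_atTop_zero.mul htail)
  rw [zero_mul, add_zero] at hlim
  exact tendsto_nhds_unique tendsto_const_nhds
    (hlim.congr fun N => (centralSum_eq_sum_add hq a N).symm)

end CentralSum

section Antidiagonal

lemma hasSum_sum_antidiagonal {A α : Type*} [AddMonoid A] [HasAntidiagonal A] [AddCommMonoid α]
    [TopologicalSpace α] [ContinuousAdd α] [RegularSpace α] {f : A × A → α} {s : α}
    (hf : HasSum f s) : HasSum (fun n => ∑ p ∈ antidiagonal n, f p) s :=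
  (HasAntidiagonal.sigmaAntidiagonalEquivProd.hasSum_iff.mpr hf).sigma fun n => by
    simpa only [← sum_coe_sort (antidiagonal n)] using! hasSum_fintype _

lemma summable_norm_sum_antidiagonal {A E : Type*} [AddMonoid A] [HasAntidiagonal A]
    [SeminormedAddCommGroup E] {f : A × A → E} (hf : Summable fun p => ‖f p‖) :
    Summable fun n => ‖∑ p ∈ antidiagonal n, f p‖ :=
  .of_nonneg_of_le (fun _ => norm_nonneg _) (fun _ => norm_sum_le _ _)
    (hasSum_sum_antidiagonal hf.hasSum).summable

end Antidiagonal

section Theta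

lemma summable_pow_mul_pow_choose_two {𝕜 : Type*} [NormedField 𝕜] [CompleteSpace 𝕜] {q : 𝕜}
    (hq : ‖q‖ < 1) (y : 𝕜) : Summable fun r : ℕ => y ^ r * q ^ (r + 1).choose 2 := by
  have hratio : Tendsto (fun r : ℕ => ‖y * q ^ (r + 1)‖) atTop (𝓝 0) := by
    simpa using (((tendsto_pow_atTop_nhds_zero_of_norm_lt_one hq).comp
      (tendsto_add_atTop_nat 1)).const_mul y).norm
  refine summable_of_ratio_norm_eventually_le one_half_lt_one ?_
  filter_upwards [hratio.eventually_le_const one_half_pos] with r hr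
  calc ‖y ^ (r + 1) * q ^ (r + 1 + 1).choose 2‖
      = ‖y * q ^ (r + 1)‖ * ‖y ^ r * q ^ (r + 1).choose 2‖ := by
        rw [← norm_mul, succ_choose_two (r + 1)]
        ring_nf
    _ ≤ 1 / 2 * ‖y ^ r * q ^ (r + 1).choose 2‖ := by gcongr

/-- The terms of index `-r` and `r + 1` of the theta series `∑ⱼ (-1)ʲ q^(j(j-1)/2) xʲ`, added. -/
noncomputable def thetaTerm (q x : ℂ) (r : ℕ) : ℂ :=
  (-1) ^ r * q ^ (r + 1).choose 2 * (x⁻¹ ^ r - x ^ (r + 1))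

lemma qPoch_mul_qPoch_mul_pow_eq_sum_antidiagonal {q x : ℂ} (hx : x ≠ 0) (n : ℕ) :
    qPoch q x (n + 1) * qPoch q (q / x) n * q ^ n =
      ∑ p ∈ antidiagonal n, thetaTerm q x p.1 * q ^ p.1 *
        (q ^ p.2 * qChoose q (2 * p.2 + (2 * p.1 + 1)) (p.2 + (2 * p.1 + 1))) := by
  rw [qPoch_mul_qPoch_eq_sum q hx, sum_mul,
    ← Nat.sum_antidiagonal_eq_sum_range_succ_mk
      (fun p : ℕ × ℕ => finiteThetaCoeff q n p.1 * (x⁻¹ ^ p.1 - x ^ (p.1 + 1)) * q ^ n) n]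
  refine sum_congr rfl fun p hp => ?_
  rw [← mem_antidiagonal.mp hp, finiteThetaCoeff, thetaTerm,
    show 2 * (p.1 + p.2) + 1 = 2 * p.2 + (2 * p.1 + 1) by ring,
    show p.1 + p.2 + p.1 + 1 = p.2 + (2 * p.1 + 1) by ring]
  ring

variable {q : ℂ} (hq : ‖q‖ < 1)
include hq

lemma summable_norm_thetaTerm (x : ℂ) : Summable fun r => ‖thetaTerm q x r‖ := by
  have hq' : ‖‖q‖‖ < 1 := by rwa [norm_norm]
  refine .of_nonneg_of_le (fun _ => norm_nonneg _) (fun r => ?_)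
    ((summable_pow_mul_pow_choose_two hq' ‖x⁻¹‖).add
      ((summable_pow_mul_pow_choose_two hq' ‖x‖).mul_left ‖x‖))
  calc ‖thetaTerm q x r‖ = ‖q‖ ^ (r + 1).choose 2 * ‖x⁻¹ ^ r - x ^ (r + 1)‖ := by
        simp [thetaTerm]
    _ ≤ ‖q‖ ^ (r + 1).choose 2 * (‖x⁻¹ ^ r‖ + ‖x ^ (r + 1)‖) := by
        gcongr
        exact norm_sub_le _ _
    _ = _ := by
        rw [norm_pow, norm_pow]
        ring

lemma summable_norm_thetaTerm_mul (x : ℂ) {f : ℕ → ℕ → ℂ} {g : ℕ → ℝ} (hg : Summable g)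
    (hf : ∀ r m, ‖f r m‖ ≤ g m) :
    Summable fun p : ℕ × ℕ => ‖thetaTerm q x p.1 * q ^ p.1 * f p.1 p.2‖ := by
  have hg0 : ∀ m, 0 ≤ g m := fun m => (norm_nonneg _).trans (hf 0 m)
  refine .of_nonneg_of_le (fun _ => norm_nonneg _) (fun p => ?_)
    ((summable_norm_thetaTerm hq x).mul_of_nonneg hg (fun _ => norm_nonneg _) hg0)
  rw [norm_mul, norm_mul, norm_pow]
  gcongr
  · exact mul_le_of_le_one_right (norm_nonneg _) (pow_le_one₀ (norm_nonneg q) hq.le)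
  · exact hf _ _

lemma summable_norm_thetaTerm_mul_qChoose (x : ℂ) :
    Summable fun p : ℕ × ℕ => ‖thetaTerm q x p.1 * q ^ p.1 *
      (q ^ p.2 * qChoose q (2 * p.2 + (2 * p.1 + 1)) (p.2 + (2 * p.1 + 1)))‖ := by
  obtain ⟨C, hC⟩ := exists_norm_qChoose_le hq
  refine summable_norm_thetaTerm_mul hq x
    (f := fun r m => q ^ m * qChoose q (2 * m + (2 * r + 1)) (m + (2 * r + 1)))
    ((summable_geometric_of_lt_one (norm_nonneg q) hq).mul_right C) fun r m => ?_
  rw [norm_mul, norm_pow]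
  gcongr
  exact hC _ _

lemma summable_norm_thetaTerm_mul_neg_one_pow (x : ℂ) :
    Summable fun p : ℕ × ℕ => ‖thetaTerm q x p.1 * q ^ p.1 *
      ((-1) ^ p.2 * q ^ (3 * (p.2 + 1).choose 2 + p.2 * (2 * p.1 + 1)))‖ :=
  summable_norm_thetaTerm_mul hq x
    (f := fun r n => (-1) ^ n * q ^ (3 * (n + 1).choose 2 + n * (2 * r + 1)))
    (summable_geometric_of_lt_one (norm_nonneg q) hq)
    fun r n => norm_neg_one_pow_mul_pow_le hq (2 * r + 1) n

theorem tsum_thetaTerm_mul_qChoose (x : ℂ) :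
    ∑' p : ℕ × ℕ, thetaTerm q x p.1 * q ^ p.1 *
        (q ^ p.2 * qChoose q (2 * p.2 + (2 * p.1 + 1)) (p.2 + (2 * p.1 + 1))) =
      (qPochInf q q)⁻¹ * ∑' p : ℕ × ℕ, thetaTerm q x p.1 * q ^ p.1 *
        ((-1) ^ p.2 * q ^ (3 * (p.2 + 1).choose 2 + p.2 * (2 * p.1 + 1))) := by
  rw [(summable_norm_thetaTerm_mul_qChoose hq x).of_norm.tsum_prod,
    (summable_norm_thetaTerm_mul_neg_one_pow hq x).of_norm.tsum_prod, ← tsum_mul_left]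
  refine tsum_congr fun r => ?_
  have hr := centralSum_eq_tsum hq (2 * r + 1)
  rw [centralSum] at hr
  simp only [tsum_mul_left]
  rw [hr, mul_left_comm]

end Theta

lemma hecke_exponent_eq (r n : ℕ) :
    n * (3 * n + 5) / 2 + 2 * n * r + r * (r + 3) / 2 =
      (r + 1).choose 2 + r + (3 * (n + 1).choose 2 + n * (2 * r + 1)) := by
  have hn : n * (3 * n + 5) / 2 = 3 * (n + 1).choose 2 + n :=
    Nat.div_eq_of_eq_mul_right two_pos (by linarith [two_mul_succ_choose_two n])
  have hr : r * (r + 3) / 2 = (r + 1).choose 2 + r :=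
    Nat.div_eq_of_eq_mul_right two_pos (by linarith [two_mul_succ_choose_two r])
  rw [hn, hr]
  ring

lemma hecke_term_eq {x : ℂ} (hx : x ≠ 0) (q : ℂ) (r n : ℕ) :
    (-1 : ℂ) ^ (n + r) * x ^ (-(r : ℤ)) *
        q ^ (n * (3 * n + 5) / 2 + 2 * n * r + r * (r + 3) / 2) * (1 - x ^ (2 * r + 1)) =
      thetaTerm q x r * q ^ r * ((-1) ^ n * q ^ (3 * (n + 1).choose 2 + n * (2 * r + 1))) := by
  have hpair : x⁻¹ ^ r - x ^ (r + 1) = x⁻¹ ^ r * (1 - x ^ (2 * r + 1)) := by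
    simp only [inv_pow]
    field_simp
    ring
  rw [hecke_exponent_eq, zpow_neg, zpow_natCast, ← inv_pow, thetaTerm, hpair]
  ring

/-- `Σ_{n≥0} (x;q)_{n+1} (q/x;q)_n q^n` as a Hecke-type double sum over
pairs `(r,n)` of nonnegative integers, with absolute convergence of all series. -/
theorem stmt7 (q x : ℂ) (hq0 : 0 < ‖q‖) (hq1 : ‖q‖ < 1)
    (hx : x ≠ 0) :
    Summable (fun n : ℕ => ‖qPoch q x (n + 1) * qPoch q (q / x) n * q ^ n‖) ∧
    Summable (fun p : ℕ × ℕ =>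
      ‖(-1 : ℂ) ^ (p.2 + p.1) * x ^ (-(p.1 : ℤ)) *
          q ^ (p.2 * (3 * p.2 + 5) / 2 + 2 * p.2 * p.1 + p.1 * (p.1 + 3) / 2) *
          (1 - x ^ (2 * p.1 + 1))‖) ∧
    ∑' n : ℕ, qPoch q x (n + 1) * qPoch q (q / x) n * q ^ n =
    (1 / qPochInf q q) *
      ∑' p : ℕ × ℕ,
        (-1 : ℂ) ^ (p.2 + p.1) * x ^ (-(p.1 : ℤ)) *
          q ^ (p.2 * (3 * p.2 + 5) / 2 + 2 * p.2 * p.1 + p.1 * (p.1 + 3) / 2) *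
          (1 - x ^ (2 * p.1 + 1)) := by
  have hsum := summable_norm_thetaTerm_mul_qChoose hq1 x
  simp only [qPoch_mul_qPoch_mul_pow_eq_sum_antidiagonal hx, hecke_term_eq hx, one_div]
  refine ⟨summable_norm_sum_antidiagonal hsum, summable_norm_thetaTerm_mul_neg_one_pow hq1 x, ?_⟩
  rw [(hasSum_sum_antidiagonal hsum.of_norm.hasSum).tsum_eq, tsum_thetaTerm_mul_qChoose hq1]
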